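/- Suppose ξ = σR for R with bounded, almost-everywhere continuous density, and let ξₙ = σₙξ with σₙ → 0 and σₙ = ω(1/n). If the conditional distribution of h(X) given Y = y has an almost-everywhere continuous Lebesgue density for y ∈ {0,1}, then LS-ECE_{π̂,ξₙ}(h) → ECE_π(ρ ∘ h) in probability, where π̂ is the empirical distribution of n i.i.d. samples from π. -/

import Mathlib

open MeasureTheory Filter Set Topology Finset

/-- The expected calibration error `ECE_π(g) = E[|E[Y | g(X)] - g(X)|]`. -/
noncomputable def ECE {α : Type*} [MeasurableSpace α] (π : Measure (α × ℝ)) (g : α → ℝ) : ℝ :=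
  ∫ q, |(π[(fun r : α × ℝ => r.2) |
      MeasurableSpace.comap (fun r : α × ℝ => g r.1) Real.measurableSpace]) q - g q.1| ∂π

/-- The logit-smoothed ECE of a joint distribution `ν` of `(X, Y)` with independent noise
of law `μξ`: `LS-ECE_{ν,ξ}(h) = E[|E[Y | ρ(h(X)+ξ)] − ρ(h(X)+ξ)|]`. -/
noncomputable def LSECE {α : Type*} [MeasurableSpace α] (ν : Measure (α × ℝ))
    (μξ : Measure ℝ) (ρ : ℝ → ℝ) (h : α → ℝ) : ℝ :=
  ∫ q, |((ν.prod μξ)[(fun r : (α × ℝ) × ℝ => r.1.2) |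
      MeasurableSpace.comap (fun r : (α × ℝ) × ℝ => ρ (h r.1.1 + r.2))
        Real.measurableSpace]) q - ρ (h q.1.1 + q.2)| ∂(ν.prod μξ)

/-- The empirical measure of `n` sample points. -/
noncomputable def empMeas {α : Type*} [MeasurableSpace α] {n : ℕ} (s : Fin n → α) :
    Measure α :=
  (n : ENNReal)⁻¹ • ∑ i : Fin n, Measure.dirac (s i)

/-!
If the score has densities `p₀`, `p₁` on the two classes, the Bayes formula gives
`E[Y | score = t] = p₁ t / (p₀ t + p₁ t)`. Hence the calibration error of `ρ ∘ score` equals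
`∫ |p₁ - ρ (p₀ + p₁)|`, which, since `0 ≤ ρ ≤ 1`, is `1`-Lipschitz in `(p₀, p₁)` for the `L¹` norm.
Under the smoothed empirical distribution the class densities are kernel density estimators, so it
is enough that these converge to `p₀` and `p₁` in mean `L¹` norm. Their bias tends to zero because
translations are continuous in `L¹`. With a kernel bounded by `C = M / σₙ`, the mean absolute
fluctuation at a point where the estimator has expectation `m` is at most `√(C m / n)`, which tends
to zero since `n σₙ → ∞`, and at most `2 m`, which makes dominated convergence applicable.
-/

open scoped Convolution

section Calibration

variable {Ω 𝓧 : Type*} [MeasurableSpace Ω] [MeasurableSpace 𝓧]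

/-- The calibration error `E|E[Y | P] - P|` of a prediction `P` of a real outcome `Y`; `ECE` and
`LSECE` are its values for two choices of the probability space and of `P`. -/
noncomputable def calibrationError (μ : Measure Ω) (Y P : Ω → ℝ) : ℝ :=
  ∫ ω, |(μ[Y | MeasurableSpace.comap P Real.measurableSpace]) ω - P ω| ∂μ

theorem ECE_eq_calibrationError (π : Measure (Ω × ℝ)) (g : Ω → ℝ) :
    ECE π g = calibrationError π (fun q => q.2) (fun q => g q.1) := rfl

theorem LSECE_eq_calibrationError (π : Measure (Ω × ℝ)) (μξ : Measure ℝ) (ρ : ℝ → ℝ)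
    (h : Ω → ℝ) :
    LSECE π μξ ρ h =
      calibrationError (π.prod μξ) (fun r => r.1.2) (fun r => ρ (h r.1.1 + r.2)) := rfl

/-- `p` is a density with respect to `ν` of the law of `T` on the event `S`. The law is not
normalized, so that `p` has total mass `μ S`. -/
structure HasDensityOn (μ : Measure Ω) (S : Set Ω) (T : Ω → 𝓧) (ν : Measure 𝓧) (p : 𝓧 → ℝ) :
    Prop where
  measurable : Measurable p
  nonneg : ∀ x, 0 ≤ p x
  map_restrict : (μ.restrict S).map T = ν.withDensity fun x => ENNReal.ofReal (p x)

/-- A binary label `Y` and a score `T` such that on each of the classes `Y = 0` and `Y = 1` the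
score has a density with respect to `ν`. -/
structure HasClassDensities (μ : Measure Ω) (Y : Ω → ℝ) (T : Ω → 𝓧) (ν : Measure 𝓧)
    (p₀ p₁ : 𝓧 → ℝ) : Prop where
  measurable_label : Measurable Y
  measurable_score : Measurable T
  label_mem : ∀ᵐ ω ∂μ, Y ω = 0 ∨ Y ω = 1
  zero : HasDensityOn μ (Y ⁻¹' {0}) T ν p₀
  one : HasDensityOn μ (Y ⁻¹' {1}) T ν p₁

variable {μ : Measure Ω} {ν : Measure 𝓧} {S S' : Set Ω} {T : Ω → 𝓧} {p p₀ p₁ : 𝓧 → ℝ}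

namespace HasDensityOn

theorem congr_set (hp : HasDensityOn μ S T ν p) (hS : S =ᵐ[μ] S') : HasDensityOn μ S' T ν p where
  measurable := hp.measurable
  nonneg := hp.nonneg
  map_restrict := by rw [← Measure.restrict_congr_set hS, hp.map_restrict]

theorem integrable [IsFiniteMeasure μ] (hp : HasDensityOn μ S T ν p) : Integrable p ν := by
  rw [← lintegral_ofReal_ne_top_iff_integrable hp.measurable.aestronglyMeasurable
    (ae_of_all _ hp.nonneg), ← setLIntegral_univ, ← withDensity_apply _ .univ, ← hp.map_restrict]
  exact measure_ne_top _ _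

theorem setIntegral_comp (hp : HasDensityOn μ S T ν p) (hT : Measurable T) {g : 𝓧 → ℝ}
    (hg : Measurable g) : ∫ ω in S, g (T ω) ∂μ = ∫ x, p x * g x ∂ν := by
  rw [← integral_map hT.aemeasurable hg.aestronglyMeasurable, hp.map_restrict,
    integral_withDensity_eq_integral_toReal_smul hp.measurable.ennreal_ofReal (by simp)]
  simp only [ENNReal.toReal_ofReal (hp.nonneg _), smul_eq_mul]

theorem add_compl (hS : MeasurableSet S) (hT : Measurable T) (h₀ : HasDensityOn μ Sᶜ T ν p₀)
    (h₁ : HasDensityOn μ S T ν p₁) : HasDensityOn μ univ T ν (fun x => p₀ x + p₁ x) where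
  measurable := h₀.measurable.add h₁.measurable
  nonneg x := add_nonneg (h₀.nonneg x) (h₁.nonneg x)
  map_restrict := by
    rw [Measure.restrict_univ, ← Measure.restrict_compl_add_restrict (μ := μ) hS,
      Measure.map_add _ _ hT,
      h₀.map_restrict, h₁.map_restrict, ← withDensity_add_left h₀.measurable.ennreal_ofReal]
    congr with x
    exact (ENNReal.ofReal_add (h₀.nonneg x) (h₁.nonneg x)).symm

theorem condExp_indicator_one [IsFiniteMeasure μ] (hS : MeasurableSet S) (hT : Measurable T)
    (h₀ : HasDensityOn μ Sᶜ T ν p₀) (h₁ : HasDensityOn μ S T ν p₁) :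
    μ[S.indicator 1 | MeasurableSpace.comap T ‹_›] =ᵐ[μ]
      fun ω => p₁ (T ω) / (p₀ (T ω) + p₁ (T ω)) := by
  set r : 𝓧 → ℝ := fun x => p₁ x / (p₀ x + p₁ x)
  have hrm : Measurable r := h₁.measurable.div (h₀.measurable.add h₁.measurable)
  have hr_le : ∀ x, ‖r x‖ ≤ 1 := fun x => by
    rw [Real.norm_of_nonneg (div_nonneg (h₁.nonneg x) (add_nonneg (h₀.nonneg x) (h₁.nonneg x)))]
    exact div_le_one_of_le₀ (by linarith [h₀.nonneg x])
      (add_nonneg (h₀.nonneg x) (h₁.nonneg x))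
  have hr_mul : ∀ x, (p₀ x + p₁ x) * r x = p₁ x := fun x =>
    mul_div_cancel_of_imp' fun hx => by linarith [h₀.nonneg x, h₁.nonneg x]
  refine (ae_eq_condExp_of_forall_setIntegral_eq hT.comap_le
    ((integrable_const 1).indicator hS) (fun _ _ _ => ?_) ?_ ?_).symm
  · exact (Integrable.of_bound (hrm.comp hT).aestronglyMeasurable 1
      (ae_of_all _ fun ω => hr_le (T ω))).integrableOn
  · rintro _ ⟨B, hB, rfl⟩ -
    calc ∫ ω in T ⁻¹' B, r (T ω) ∂μ
        = ∫ ω in univ, B.indicator r (T ω) ∂μ := by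
          rw [setIntegral_univ, ← integral_indicator (hT hB)]; rfl
      _ = ∫ x, p₁ x * B.indicator 1 x ∂ν := by
          rw [(add_compl hS hT h₀ h₁).setIntegral_comp hT (hrm.indicator hB)]
          congr with x
          by_cases hx : x ∈ B <;> simp [hx, hr_mul]
      _ = ∫ ω in S, B.indicator 1 (T ω) ∂μ :=
          (h₁.setIntegral_comp hT (measurable_one.indicator hB)).symm
      _ = ∫ ω in T ⁻¹' B, S.indicator 1 ω ∂μ := by
          rw [← integral_indicator hS, ← integral_indicator (hT hB)]
          congr with ω
          by_cases hω : ω ∈ S <;> by_cases hω' : T ω ∈ B <;> simp [hω, hω']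
  · exact (hrm.comp (comap_measurable T)).aestronglyMeasurable

end HasDensityOn

namespace HasClassDensities

variable {Ω' : Type*} [MeasurableSpace Ω'] {μ' : Measure Ω'} {Y : Ω → ℝ} {Y' : Ω' → ℝ}
  {T' : Ω' → 𝓧} {p₀' p₁' : 𝓧 → ℝ} {ρ : 𝓧 → ℝ}

theorem compl_one (H : HasClassDensities μ Y T ν p₀ p₁) :
    HasDensityOn μ (Y ⁻¹' {1})ᶜ T ν p₀ := by
  refine H.zero.congr_set ?_
  filter_upwards [H.label_mem] with ω hω
  apply propext
  change Y ω = 0 ↔ ¬ Y ω = 1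
  rcases hω with hω | hω <;> simp [hω]

theorem condExp_label [IsFiniteMeasure μ] (H : HasClassDensities μ Y T ν p₀ p₁) :
    μ[Y | MeasurableSpace.comap T ‹_›] =ᵐ[μ] fun ω => p₁ (T ω) / (p₀ (T ω) + p₁ (T ω)) := by
  have hY : Y =ᵐ[μ] (Y ⁻¹' {1}).indicator 1 := by
    filter_upwards [H.label_mem] with ω hω
    rcases hω with hω | hω <;> simp [Set.indicator, hω]
  exact (condExp_congr_ae hY).trans (HasDensityOn.condExp_indicator_one
    (H.measurable_label (measurableSet_singleton 1)) H.measurable_score H.compl_one H.one)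

theorem calibrationError_eq [IsFiniteMeasure μ] (H : HasClassDensities μ Y T ν p₀ p₁)
    (hρ : MeasurableEmbedding ρ) :
    calibrationError μ Y (fun ω => ρ (T ω)) = ∫ x, |p₁ x - ρ x * (p₀ x + p₁ x)| ∂ν := by
  have hcomap : MeasurableSpace.comap (fun ω => ρ (T ω)) Real.measurableSpace
      = MeasurableSpace.comap T ‹_› := by
    rw [← hρ.comap_eq, MeasurableSpace.comap_comp]; rfl
  have hdens := HasDensityOn.add_compl (H.measurable_label (measurableSet_singleton 1))
    H.measurable_score H.compl_one H.one
  have hm : Measurable fun x => |p₁ x / (p₀ x + p₁ x) - ρ x| :=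
    ((H.one.measurable.div hdens.measurable).sub hρ.measurable).abs
  calc calibrationError μ Y (fun ω => ρ (T ω))
      = ∫ ω, |p₁ (T ω) / (p₀ (T ω) + p₁ (T ω)) - ρ (T ω)| ∂μ := by
        rw [calibrationError, hcomap]
        refine integral_congr_ae ?_
        filter_upwards [H.condExp_label] with ω hω
        rw [hω]
    _ = ∫ x, (p₀ x + p₁ x) * |p₁ x / (p₀ x + p₁ x) - ρ x| ∂ν := by
        rw [← setIntegral_univ, hdens.setIntegral_comp H.measurable_score hm]
    _ = ∫ x, |p₁ x - ρ x * (p₀ x + p₁ x)| ∂ν := by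
        congr with x
        have hx : (p₀ x + p₁ x) * (p₁ x / (p₀ x + p₁ x)) = p₁ x :=
          mul_div_cancel_of_imp' fun hx => by linarith [H.zero.nonneg x, H.one.nonneg x]
        rw [← abs_of_nonneg (hdens.nonneg x), ← abs_mul, abs_of_nonneg (hdens.nonneg x), mul_sub,
          hx, mul_comm (ρ x)]

theorem integrable_sub_mul [IsFiniteMeasure μ] (H : HasClassDensities μ Y T ν p₀ p₁)
    (hρ : Measurable ρ) (hρ01 : ∀ x, ρ x ∈ Icc (0 : ℝ) 1) :
    Integrable (fun x => p₁ x - ρ x * (p₀ x + p₁ x)) ν :=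
  H.one.integrable.sub <| (H.zero.integrable.add H.one.integrable).bdd_mul (c := 1)
    hρ.aestronglyMeasurable <| ae_of_all _ fun x => by
      rw [Real.norm_of_nonneg (hρ01 x).1]; exact (hρ01 x).2

theorem enorm_calibrationError_sub_le [IsFiniteMeasure μ] [IsFiniteMeasure μ']
    (H : HasClassDensities μ Y T ν p₀ p₁) (H' : HasClassDensities μ' Y' T' ν p₀' p₁')
    (hρ : MeasurableEmbedding ρ) (hρ01 : ∀ x, ρ x ∈ Icc (0 : ℝ) 1) :
    ‖calibrationError μ Y (fun ω => ρ (T ω)) - calibrationError μ' Y' (fun ω => ρ (T' ω))‖ₑ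
      ≤ eLpNorm (p₀ - p₀') 1 ν + eLpNorm (p₁ - p₁') 1 ν := by
  have hpt : ∀ x, ‖|p₁ x - ρ x * (p₀ x + p₁ x)| - |p₁' x - ρ x * (p₀' x + p₁' x)|‖
      ≤ ‖p₀ x - p₀' x‖ + ‖p₁ x - p₁' x‖ := fun x => by
    obtain ⟨hρ0, hρ1⟩ := hρ01 x
    calc _ ≤ |(p₁ x - ρ x * (p₀ x + p₁ x)) - (p₁' x - ρ x * (p₀' x + p₁' x))| :=
          abs_abs_sub_abs_le_abs_sub _ _
      _ = |-ρ x * (p₀ x - p₀' x) + (1 - ρ x) * (p₁ x - p₁' x)| := by ring_nf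
      _ ≤ ρ x * |p₀ x - p₀' x| + (1 - ρ x) * |p₁ x - p₁' x| := by
          refine (abs_add_le _ _).trans_eq ?_
          rw [abs_mul, abs_mul, abs_neg, abs_of_nonneg hρ0, abs_of_nonneg (sub_nonneg.2 hρ1)]
      _ ≤ |p₀ x - p₀' x| + |p₁ x - p₁' x| :=
          add_le_add (mul_le_of_le_one_left (abs_nonneg _) hρ1)
            (mul_le_of_le_one_left (abs_nonneg _) (by linarith))
  rw [H.calibrationError_eq hρ, H'.calibrationError_eq hρ,
    ← integral_sub (H.integrable_sub_mul hρ.measurable hρ01).abs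
      (H'.integrable_sub_mul hρ.measurable hρ01).abs,
    eLpNorm_one_eq_lintegral_enorm, eLpNorm_one_eq_lintegral_enorm,
    ← lintegral_add_left (H.zero.measurable.sub H'.zero.measurable).enorm]
  refine (enorm_integral_le_lintegral_enorm _).trans (lintegral_mono fun x => ?_)
  simp only [Pi.sub_apply, ← ofReal_norm]
  rw [← ENNReal.ofReal_add (norm_nonneg _) (norm_nonneg _)]
  exact ENNReal.ofReal_le_ofReal (hpt x)

end HasClassDensities

end Calibration

section Empirical

variable {Ω : Type*} [MeasurableSpace Ω] {n : ℕ}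

theorem lintegral_empMeas (s : Fin n → Ω) {f : Ω → ENNReal} (hf : Measurable f) :
    ∫⁻ ω, f ω ∂empMeas s = (n : ENNReal)⁻¹ * ∑ i, f (s i) := by
  simp only [empMeas, lintegral_smul_measure, lintegral_finsetSum_measure,
    lintegral_dirac' _ hf, smul_eq_mul]

instance isFiniteMeasure_empMeas (s : Fin n → Ω) : IsFiniteMeasure (empMeas s) := by
  refine ⟨?_⟩
  rw [← lintegral_one, lintegral_empMeas s measurable_const]
  obtain rfl | hn := eq_or_ne n 0
  · simp
  · exact ENNReal.mul_lt_top (by simpa [pos_iff_ne_zero] using hn) (by simp)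

theorem ae_empMeas_of_forall (s : Fin n → Ω) {P : Ω → Prop} (hP : MeasurableSet {ω | P ω})
    (h : ∀ i, P (s i)) : ∀ᵐ ω ∂empMeas s, P ω := by
  rw [ae_iff]
  change empMeas s {ω | P ω}ᶜ = 0
  rw [← lintegral_indicator_one hP.compl,
    lintegral_empMeas s (measurable_one.indicator hP.compl)]
  simp [h]

end Empirical

section KernelEstimate

variable {Ω G : Type*} [AddCommGroup G] {n : ℕ}

/-- The kernel density estimator of the score `T` on the event `S`, computed from the sample `s`.
Like the density it estimates, it is not normalized by the mass of `S`. -/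
noncomputable def kernelEstimate (K : G → ℝ) (S : Set Ω) (T : Ω → G) (s : Fin n → Ω) (t : G) : ℝ :=
  (n : ℝ)⁻¹ * ∑ i, S.indicator (fun ω => K (t - T ω)) (s i)

variable {K : G → ℝ} {S : Set Ω} {T : Ω → G}

theorem kernelEstimate_nonneg (hK : ∀ x, 0 ≤ K x) (s : Fin n → Ω) (t : G) :
    0 ≤ kernelEstimate K S T s t :=
  mul_nonneg (by positivity) (sum_nonneg fun _ _ => indicator_nonneg (fun _ _ => hK _) _)

theorem ofReal_kernelEstimate (hK : ∀ x, 0 ≤ K x) (s : Fin n → Ω) (t : G) :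
    ENNReal.ofReal (kernelEstimate K S T s t) =
      (n : ENNReal)⁻¹ * ∑ i, S.indicator (fun ω => ENNReal.ofReal (K (t - T ω))) (s i) := by
  have hterm : ∀ ω, ENNReal.ofReal (S.indicator (fun ω => K (t - T ω)) ω) =
      S.indicator (fun ω => ENNReal.ofReal (K (t - T ω))) ω := fun ω => by
    by_cases hω : ω ∈ S <;> simp [hω]
  obtain rfl | hn := eq_or_ne n 0
  · simp [kernelEstimate]
  · rw [kernelEstimate, ENNReal.ofReal_mul (by positivity),
      ENNReal.ofReal_sum_of_nonneg fun _ _ => indicator_nonneg (fun _ _ => hK _) _,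
      ENNReal.ofReal_inv_of_pos (by positivity), ENNReal.ofReal_natCast]
    simp only [hterm]

variable [MeasurableSpace Ω] [MeasurableSpace G] [MeasurableAdd₂ G] [MeasurableNeg G]

theorem measurable_kernelEstimate_uncurry (hK : Measurable K) (hS : MeasurableSet S)
    (hT : Measurable T) :
    Measurable fun q : (Fin n → Ω) × G => kernelEstimate K S T q.1 q.2 := by
  refine (Finset.measurable_sum _ fun i _ => ?_).const_mul _
  have hker : Measurable fun q : (Fin n → Ω) × G => K (q.2 - T (q.1 i)) := by fun_prop
  exact hker.indicator (hS.preimage ((measurable_pi_apply i).comp measurable_fst))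

theorem hasDensityOn_empMeas_prod {ν : Measure G} [SFinite ν] [ν.IsAddLeftInvariant]
    (hK : Measurable K) (hK0 : ∀ x, 0 ≤ K x) (hS : MeasurableSet S) (hT : Measurable T)
    (s : Fin n → Ω) :
    HasDensityOn ((empMeas s).prod (ν.withDensity fun x => ENNReal.ofReal (K x)))
      (Prod.fst ⁻¹' S) (fun r => T r.1 + r.2) ν (kernelEstimate K S T s) where
  measurable := (measurable_kernelEstimate_uncurry hK hS hT).comp measurable_prodMk_left
  nonneg := kernelEstimate_nonneg hK0 s
  map_restrict := by
    have hadd : Measurable fun r : Ω × G => T r.1 + r.2 := by fun_prop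
    have hslice : ∀ B, MeasurableSet B → ∀ ω, (ν.withDensity fun x => ENNReal.ofReal (K x))
        (Prod.mk ω ⁻¹' ((fun r => T r.1 + r.2) ⁻¹' B ∩ Prod.fst ⁻¹' S)) =
        ∫⁻ t in B, S.indicator (fun ω => ENNReal.ofReal (K (t - T ω))) ω ∂ν := fun B hB ω => by
      by_cases hω : ω ∈ S
      · have hpre : Prod.mk ω ⁻¹' ((fun r => T r.1 + r.2) ⁻¹' B ∩ Prod.fst ⁻¹' S) =
            (T ω + ·) ⁻¹' B := by ext x; simp [hω]
        simp only [indicator_of_mem hω]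
        rw [hpre, withDensity_apply _ (measurable_const_add _ hB),
          ← (measurePreserving_add_left ν (T ω)).setLIntegral_comp_preimage hB (by fun_prop)]
        simp only [add_sub_cancel_left]
      · have hpre : Prod.mk ω ⁻¹' ((fun r => T r.1 + r.2) ⁻¹' B ∩ Prod.fst ⁻¹' S) = ∅ := by
          ext x; simp [hω]
        simp [hpre, hω]
    ext B hB
    have hBS := (hadd hB).inter (measurable_fst hS)
    rw [Measure.map_apply hadd hB, Measure.restrict_apply (hadd hB), Measure.prod_apply hBS,
      lintegral_empMeas s (measurable_measure_prodMk_left hBS), withDensity_apply _ hB]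
    simp only [hslice B hB, ofReal_kernelEstimate hK0]
    have hind : ∀ ω, Measurable fun t =>
        S.indicator (fun ω => ENNReal.ofReal (K (t - T ω))) ω := fun ω => by
      by_cases hω : ω ∈ S
      · simp only [indicator_of_mem hω]; fun_prop
      · simp only [indicator_of_notMem hω]; exact measurable_const
    rw [lintegral_const_mul _ (Finset.measurable_sum _ fun i _ => hind (s i)),
      lintegral_finsetSum _ fun i _ => hind (s i)]

theorem hasClassDensities_empMeas_prod {ν : Measure G} [SFinite ν] [ν.IsAddLeftInvariant]
    (hK : Measurable K) (hK0 : ∀ x, 0 ≤ K x) {Y : Ω → ℝ} (hY : Measurable Y) (hT : Measurable T)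
    {s : Fin n → Ω} (hs : ∀ i, Y (s i) = 0 ∨ Y (s i) = 1) :
    HasClassDensities ((empMeas s).prod (ν.withDensity fun x => ENNReal.ofReal (K x)))
      (fun r => Y r.1) (fun r => T r.1 + r.2) ν (kernelEstimate K (Y ⁻¹' {0}) T s)
      (kernelEstimate K (Y ⁻¹' {1}) T s) where
  measurable_label := hY.comp measurable_fst
  measurable_score := by fun_prop
  label_mem := Measure.quasiMeasurePreserving_fst.ae <| ae_empMeas_of_forall s
    ((hY (measurableSet_singleton 0)).union (hY (measurableSet_singleton 1))) hs
  zero := hasDensityOn_empMeas_prod hK hK0 (hY (measurableSet_singleton 0)) hT s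
  one := hasDensityOn_empMeas_prod hK hK0 (hY (measurableSet_singleton 1)) hT s

end KernelEstimate

section Deviation

open ProbabilityTheory

variable {Ω : Type*} [MeasurableSpace Ω] {μ : Measure Ω} {X f : Ω → ℝ} {a m m' C : ℝ} {n : ℕ}

theorem lintegral_enorm_sub_integral_le_sqrt_variance [IsProbabilityMeasure μ] (hX : MemLp X 2 μ) :
    ∫⁻ ω, ‖X ω - μ[X]‖ₑ ∂μ ≤ ENNReal.ofReal √Var[X; μ] := by
  have hdev : AEStronglyMeasurable (fun ω => X ω - μ[X]) μ := hX.1.sub aestronglyMeasurable_const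
  calc ∫⁻ ω, ‖X ω - μ[X]‖ₑ ∂μ
      = eLpNorm (fun ω => X ω - μ[X]) 1 μ := eLpNorm_one_eq_lintegral_enorm.symm
    _ ≤ eLpNorm (fun ω => X ω - μ[X]) 2 μ := eLpNorm_le_eLpNorm_of_exponent_le one_le_two hdev
    _ = eVar[X; μ] ^ (1 / 2 : ℝ) := by
        simp [eLpNorm_eq_lintegral_rpow_enorm_toReal two_ne_zero ENNReal.ofNat_ne_top, evariance]
    _ = ENNReal.ofReal √Var[X; μ] := by
        rw [← ofReal_variance hX, ENNReal.ofReal_rpow_of_nonneg (variance_nonneg _ _) (by norm_num),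
          Real.sqrt_eq_rpow]

theorem lintegral_enorm_sub_integral_le_two_mul [IsProbabilityMeasure μ] (hX : Integrable X μ)
    (hX0 : ∀ ω, 0 ≤ X ω) : ∫⁻ ω, ‖X ω - μ[X]‖ₑ ∂μ ≤ ENNReal.ofReal (2 * μ[X]) := by
  have hm : 0 ≤ μ[X] := integral_nonneg hX0
  calc ∫⁻ ω, ‖X ω - μ[X]‖ₑ ∂μ
      ≤ ∫⁻ ω, ENNReal.ofReal (X ω + μ[X]) ∂μ := lintegral_mono fun ω => by
        rw [← ofReal_norm]
        exact ENNReal.ofReal_le_ofReal (abs_le.2 ⟨by linarith [hX0 ω], by linarith⟩)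
    _ = ENNReal.ofReal (∫ ω, X ω + μ[X] ∂μ) :=
        (ofReal_integral_eq_lintegral_ofReal (hX.add (integrable_const _))
          (ae_of_all _ fun ω => add_nonneg (hX0 ω) hm)).symm
    _ = ENNReal.ofReal (2 * μ[X]) := by
        rw [integral_add hX (integrable_const _), integral_const, probReal_univ, one_smul, two_mul]

/-- A bound, for `a = √(C / n)`, on the mean absolute deviation of the mean of `n`
independent observations with values in `[0, C]` and expectation `m`. Because of the term `2 * m`,
the bound at `m = p x` is an integrable function of `x` for every integrable `p`, even if `√(p x)`
is not. -/
noncomputable def deviationBound (a m : ℝ) : ℝ := min (2 * m) (a * √m)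

theorem measurable_deviationBound (a : ℝ) : Measurable (deviationBound a) := by
  unfold deviationBound; fun_prop

theorem deviationBound_nonneg (ha : 0 ≤ a) (hm : 0 ≤ m) : 0 ≤ deviationBound a m :=
  le_min (by positivity) (by positivity)

theorem variance_le_mul_integral [IsProbabilityMeasure μ] (hf : Measurable f)
    (hfC : ∀ ω, f ω ∈ Icc 0 C) : Var[f; μ] ≤ C * μ[f] := by
  have hfm : MemLp f 2 μ := MemLp.of_bound hf.aestronglyMeasurable C
    (ae_of_all _ fun ω => (Real.norm_of_nonneg (hfC ω).1).trans_le (hfC ω).2)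
  refine (variance_le_expectation_sq hf.aestronglyMeasurable).trans ?_
  rw [← integral_const_mul]
  refine integral_mono hfm.integrable_sq ((hfm.integrable one_le_two).const_mul C) fun ω => ?_
  rw [Pi.pow_apply, sq]
  exact mul_le_mul_of_nonneg_right (hfC ω).2 (hfC ω).1

theorem lintegral_enorm_sampleMean_sub_integral_le [IsProbabilityMeasure μ] (hf : Measurable f)
    (hfC : ∀ ω, f ω ∈ Icc 0 C) (hn : n ≠ 0) :
    ∫⁻ s, ‖(n : ℝ)⁻¹ * ∑ i, f (s i) - μ[f]‖ₑ ∂(Measure.pi fun _ : Fin n => μ)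
      ≤ ENNReal.ofReal (deviationBound √(C / n) μ[f]) := by
  have hfm : ∀ q, MemLp f q μ := fun q => MemLp.of_bound hf.aestronglyMeasurable C
    (ae_of_all _ fun ω => (Real.norm_of_nonneg (hfC ω).1).trans_le (hfC ω).2)
  set P := Measure.pi fun _ : Fin n => μ
  set X : (Fin n → Ω) → ℝ := fun s => (n : ℝ)⁻¹ * ∑ i, f (s i)
  have hfi : ∀ i, MemLp (fun s : Fin n → Ω => f (s i)) 2 P := fun i =>
    (hfm 2).comp_measurePreserving (measurePreserving_eval _ i)
  have hX : MemLp X 2 P := (memLp_finsetSum _ fun i _ => hfi i).const_mul _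
  have hmean : P[X] = μ[f] := by
    rw [integral_const_mul, integral_finsetSum _ fun i _ => (hfi i).integrable one_le_two]
    simp only [P, integral_comp_eval (μ := fun _ : Fin n => μ) hf.aestronglyMeasurable]
    simp [hn]
  have hvar : Var[X; P] ≤ C / n * μ[f] := by
    have hsum : Var[fun s : Fin n → Ω => ∑ i, f (s i); P] = n * Var[f; μ] := by
      simpa [Finset.sum_fn] using
        variance_sum_pi (μ := fun _ : Fin n => μ) (X := fun _ => f) fun _ => hfm 2
    calc Var[X; P] = (n : ℝ)⁻¹ * Var[f; μ] := by
          rw [variance_const_mul, hsum]; field_simp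
      _ ≤ (n : ℝ)⁻¹ * (C * μ[f]) := by gcongr; exact variance_le_mul_integral hf hfC
      _ = C / n * μ[f] := by ring
  rw [deviationBound, ENNReal.ofReal_min, ← hmean]
  refine le_min (lintegral_enorm_sub_integral_le_two_mul (hX.integrable one_le_two) fun s => ?_) ?_
  · exact mul_nonneg (by positivity) (sum_nonneg fun i _ => (hfC _).1)
  · refine (lintegral_enorm_sub_integral_le_sqrt_variance hX).trans (ENNReal.ofReal_le_ofReal ?_)
    rw [hmean, ← Real.sqrt_mul' _ (integral_nonneg fun ω => (hfC ω).1)]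
    exact Real.sqrt_le_sqrt hvar

theorem deviationBound_le_add (ha : 0 ≤ a) (hm : 0 ≤ m) (hm' : 0 ≤ m') :
    deviationBound a m ≤ deviationBound a m' + 2 * |m - m'| := by
  have hd := le_abs_self (m - m')
  have hd0 := abs_nonneg (m - m')
  rw [deviationBound, deviationBound, ← min_add_add_right]
  refine le_min ((min_le_left _ _).trans (by linarith)) ?_
  -- The branch `a * √m` is the smaller one where `a ≤ 2 * √m`, and its slope `a / (2 * √m)` is at
  -- most `1` there.
  obtain hle | hlt := le_total (√m) (√m')
  · exact (min_le_right _ _).trans <|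
      (mul_le_mul_of_nonneg_left hle ha).trans (by linarith)
  obtain ha' | ha' := le_total (2 * √m') a
  · refine (min_le_left _ _).trans ?_
    nlinarith [mul_le_mul_of_nonneg_right ha' (Real.sqrt_nonneg m'), Real.sq_sqrt hm']
  · refine (min_le_right _ _).trans ?_
    nlinarith [mul_le_mul_of_nonneg_right ha' (sub_nonneg.2 hlt), Real.sq_sqrt hm,
      Real.sq_sqrt hm', mul_le_mul_of_nonneg_right hlt (sub_nonneg.2 hlt)]

theorem tendsto_lintegral_deviationBound {ν : Measure Ω} {p : Ω → ℝ} (hp : Measurable p)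
    (hp0 : ∀ x, 0 ≤ p x) (hpi : Integrable p ν) {a : ℕ → ℝ} (ha : Tendsto a atTop (𝓝 0)) :
    Tendsto (fun n => ∫⁻ x, ENNReal.ofReal (deviationBound (a n) (p x)) ∂ν) atTop (𝓝 0) := by
  have hlim : ∀ x, Tendsto (fun n => ENNReal.ofReal (deviationBound (a n) (p x))) atTop (𝓝 0) := by
    intro x
    have h := (tendsto_const_nhds (x := 2 * p x)).min (ha.mul_const √(p x))
    rw [zero_mul, min_eq_right (by linarith [hp0 x])] at h
    exact ENNReal.ofReal_zero ▸ ENNReal.tendsto_ofReal h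
  have hle : ∀ n, ∀ᵐ x ∂ν, ENNReal.ofReal (deviationBound (a n) (p x)) ≤ ENNReal.ofReal (2 * p x) :=
    fun n => ae_of_all _ fun x => ENNReal.ofReal_le_ofReal (min_le_left _ _)
  have hfin : ∫⁻ x, ENNReal.ofReal (2 * p x) ∂ν ≠ ⊤ :=
    (hpi.const_mul 2).lintegral_lt_top.ne
  have hmeas : ∀ n, Measurable fun x => ENNReal.ofReal (deviationBound (a n) (p x)) := fun n =>
    ((measurable_deviationBound (a n)).comp hp).ennreal_ofReal
  simpa only [lintegral_zero] using
    tendsto_lintegral_of_dominated_convergence _ hmeas hle hfin (ae_of_all _ hlim)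

end Deviation

section KernelEstimateError

variable {Ω G : Type*} [MeasurableSpace Ω] [AddCommGroup G] [MeasurableSpace G]
  [MeasurableAdd₂ G] [MeasurableNeg G] {μ : Measure Ω} {ν : Measure G}
  {S : Set Ω} {T : Ω → G} {K p : G → ℝ} {C : ℝ} {n : ℕ}

theorem measurable_eLpNorm_kernelEstimate_sub [SFinite ν] (hK : Measurable K)
    (hS : MeasurableSet S) (hT : Measurable T) (hp : Measurable p) :
    Measurable fun s : Fin n → Ω => eLpNorm (kernelEstimate K S T s - p) 1 ν := by
  simp only [eLpNorm_one_eq_lintegral_enorm]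
  exact ((measurable_kernelEstimate_uncurry hK hS hT).sub
    (hp.comp measurable_snd)).enorm.lintegral_prod_right'

theorem HasDensityOn.integral_indicator_kernel [ν.IsAddLeftInvariant] [ν.IsNegInvariant]
    (hp : HasDensityOn μ S T ν p) (hK : Measurable K) (hS : MeasurableSet S) (hT : Measurable T)
    (t : G) : ∫ ω, S.indicator (fun ω => K (t - T ω)) ω ∂μ =
      (K ⋆[ContinuousLinearMap.mul ℝ ℝ, ν] p) t := by
  rw [integral_indicator hS, hp.setIntegral_comp hT (g := fun x => K (t - x)) (by fun_prop),
    convolution_mul_swap]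
  simp only [mul_comm]

variable [IsProbabilityMeasure μ] [ν.IsAddLeftInvariant]

theorem lintegral_enorm_kernelEstimate_sub_le [ν.IsNegInvariant] (hp : HasDensityOn μ S T ν p)
    (hK : Measurable K) (hKC : ∀ x, K x ∈ Icc 0 C) (hS : MeasurableSet S) (hT : Measurable T)
    (hn : n ≠ 0) (t : G) :
    ∫⁻ s, ‖kernelEstimate K S T s t - p t‖ₑ ∂(Measure.pi fun _ : Fin n => μ) ≤
      ENNReal.ofReal (deviationBound √(C / n) (p t)) +
        3 * ‖(K ⋆[ContinuousLinearMap.mul ℝ ℝ, ν] p) t - p t‖ₑ := by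
  set g := (K ⋆[ContinuousLinearMap.mul ℝ ℝ, ν] p) t
  have hC : 0 ≤ C := (hKC 0).1.trans (hKC 0).2
  have hf : Measurable (S.indicator fun ω => K (t - T ω)) :=
    (hK.comp (measurable_const.sub hT)).indicator hS
  have hfC : ∀ ω, S.indicator (fun ω => K (t - T ω)) ω ∈ Icc 0 C := fun ω => by
    by_cases hω : ω ∈ S <;> simp [hω, hC, (hKC _).1, (hKC _).2]
  have hg : ∫ ω, S.indicator (fun ω => K (t - T ω)) ω ∂μ = g :=
    hp.integral_indicator_kernel hK hS hT t
  have hg0 : 0 ≤ g := hg ▸ integral_nonneg fun ω => (hfC ω).1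
  have hdev : ∫⁻ s, ‖kernelEstimate K S T s t - g‖ₑ ∂(Measure.pi fun _ : Fin n => μ) ≤
      ENNReal.ofReal (deviationBound √(C / n) g) :=
    hg ▸ lintegral_enorm_sampleMean_sub_integral_le hf hfC hn
  calc ∫⁻ s, ‖kernelEstimate K S T s t - p t‖ₑ ∂(Measure.pi fun _ : Fin n => μ)
      ≤ ∫⁻ s, ‖kernelEstimate K S T s t - g‖ₑ + ‖g - p t‖ₑ ∂(Measure.pi fun _ : Fin n => μ) :=
        lintegral_mono fun s => by
          rw [← sub_add_sub_cancel _ g]; exact enorm_add_le _ _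
    _ = (∫⁻ s, ‖kernelEstimate K S T s t - g‖ₑ ∂(Measure.pi fun _ : Fin n => μ)) +
          ‖g - p t‖ₑ := by
        rw [lintegral_add_right _ measurable_const, lintegral_const, measure_univ, mul_one]
    _ ≤ ENNReal.ofReal (deviationBound √(C / n) (p t) + 2 * |g - p t|) + ‖g - p t‖ₑ := by
        gcongr
        exact hdev.trans <| ENNReal.ofReal_le_ofReal <|
          deviationBound_le_add (Real.sqrt_nonneg _) hg0 (hp.nonneg t)
    _ = ENNReal.ofReal (deviationBound √(C / n) (p t)) + 3 * ‖g - p t‖ₑ := by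
        rw [ENNReal.ofReal_add (deviationBound_nonneg (Real.sqrt_nonneg _) (hp.nonneg t))
          (by positivity), ENNReal.ofReal_mul zero_le_two, ← Real.norm_eq_abs, ofReal_norm,
          ENNReal.ofReal_ofNat]
        ring

theorem lintegral_eLpNorm_kernelEstimate_sub_le [SFinite ν] [ν.IsNegInvariant]
    (hp : HasDensityOn μ S T ν p) (hK : Measurable K) (hKC : ∀ x, K x ∈ Icc 0 C)
    (hS : MeasurableSet S) (hT : Measurable T) (hn : n ≠ 0) :
    ∫⁻ s, eLpNorm (kernelEstimate K S T s - p) 1 ν ∂(Measure.pi fun _ : Fin n => μ) ≤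
      ∫⁻ t, ENNReal.ofReal (deviationBound √(C / n) (p t)) ∂ν +
        3 * eLpNorm ((K ⋆[ContinuousLinearMap.mul ℝ ℝ, ν] p) - p) 1 ν := by
  have hmeas : Measurable fun q : (Fin n → Ω) × G => ‖kernelEstimate K S T q.1 q.2 - p q.2‖ₑ :=
    ((measurable_kernelEstimate_uncurry hK hS hT).sub (hp.measurable.comp measurable_snd)).enorm
  simp only [eLpNorm_one_eq_lintegral_enorm, Pi.sub_apply]
  rw [lintegral_lintegral_swap hmeas.aemeasurable, ← lintegral_const_mul' _ _ ENNReal.ofNat_ne_top,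
    ← lintegral_add_left (f := fun t => ENNReal.ofReal (deviationBound √(C / n) (p t)))
      ((measurable_deviationBound _).comp hp.measurable).ennreal_ofReal]
  exact lintegral_mono fun t => lintegral_enorm_kernelEstimate_sub_le hp hK hKC hS hT hn t

theorem measure_le_abs_calibrationError_sub_le [SFinite ν] {Y : Ω → ℝ} {p₀ p₁ ρ : G → ℝ}
    (H : HasClassDensities μ Y T ν p₀ p₁) (hK : Measurable K) (hK0 : ∀ x, 0 ≤ K x)
    (hKi : Integrable K ν) (hρ : MeasurableEmbedding ρ) (hρ01 : ∀ x, ρ x ∈ Icc (0 : ℝ) 1) {ε : ℝ}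
    (hε : 0 < ε) :
    (Measure.pi fun _ : Fin n => μ) {s | ε ≤ |calibrationError
        ((empMeas s).prod (ν.withDensity fun x => ENNReal.ofReal (K x)))
        (fun r => Y r.1) (fun r => ρ (T r.1 + r.2)) - calibrationError μ Y (fun ω => ρ (T ω))|} ≤
      (∫⁻ s, eLpNorm (kernelEstimate K (Y ⁻¹' {0}) T s - p₀) 1 ν
          ∂(Measure.pi fun _ : Fin n => μ) +
        ∫⁻ s, eLpNorm (kernelEstimate K (Y ⁻¹' {1}) T s - p₁) 1 ν
          ∂(Measure.pi fun _ : Fin n => μ)) / ENNReal.ofReal ε := by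
  have hmeas : ∀ y, ∀ {p}, Measurable p → Measurable fun s : Fin n → Ω =>
      eLpNorm (kernelEstimate K (Y ⁻¹' {y}) T s - p) 1 ν := fun y _ hp =>
    measurable_eLpNorm_kernelEstimate_sub hK (H.measurable_label (measurableSet_singleton y))
      H.measurable_score hp
  have hlabels : ∀ᵐ s ∂(Measure.pi fun _ : Fin n => μ), ∀ i, Y (s i) = 0 ∨ Y (s i) = 1 :=
    ae_all_iff.2 fun i => (measurePreserving_eval (fun _ : Fin n => μ) i).quasiMeasurePreserving.ae
      (p := fun ω => Y ω = 0 ∨ Y ω = 1) H.label_mem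
  have := isFiniteMeasure_withDensity_ofReal hKi.2
  rw [← lintegral_add_left (hmeas 0 H.zero.measurable)]
  refine (measure_mono_ae ?_).trans <| meas_ge_le_lintegral_div
    ((hmeas 0 H.zero.measurable).add (hmeas 1 H.one.measurable)).aemeasurable
    (by simpa using hε) ENNReal.ofReal_ne_top
  filter_upwards [hlabels] with s hs hεs
  calc ENNReal.ofReal ε ≤ _ := ENNReal.ofReal_le_ofReal hεs
    _ = _ := (Real.enorm_eq_ofReal_abs _).symm
    _ ≤ _ := HasClassDensities.enorm_calibrationError_sub_le
        (hasClassDensities_empMeas_prod hK hK0 H.measurable_label H.measurable_score hs) H hρ hρ01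

end KernelEstimateError

section ApproximateIdentity

theorem tendsto_eLpNorm_comp_sub_sub {G E : Type*} [AddGroup G] [TopologicalSpace G]
    [IsTopologicalAddGroup G] [MeasurableSpace G] [BorelSpace G] [NormedAddCommGroup E]
    {ν : Measure G} [IsLocallyFiniteMeasure ν] [ν.InnerRegularCompactLTTop]
    [ν.IsAddRightInvariant] {q : ENNReal} [Fact (1 ≤ q)] (hq : q ≠ ⊤) {p : G → E}
    (hp : MemLp p q ν) :
    Tendsto (fun y => eLpNorm (fun x => p (x - y) - p x) q ν) (𝓝 0) (𝓝 0) := by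
  let shift : C(G, C(G, G)) := ContinuousMap.curry ⟨fun z : G × G => z.2 - z.1, by fun_prop⟩
  have hshift : ∀ y, MeasurePreserving (shift y) ν ν := measurePreserving_sub_right ν
  have hcont : Continuous fun y => Lp.compMeasurePreserving (shift y) (hshift y) (hp.toLp p) :=
    continuous_const.compMeasurePreservingLp shift.continuous hshift hq
  have hedist : ∀ y, edist (Lp.compMeasurePreserving (shift y) (hshift y) (hp.toLp p))
      (hp.toLp p) = eLpNorm (fun x => p (x - y) - p x) q ν := fun y =>
    Lp.edist_toLp_toLp _ _ (hp.comp_measurePreserving (hshift y)) hp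
  have hlim := (hcont.edist (continuous_const (y := hp.toLp p))).tendsto' 0 0 ?_
  · simpa only [hedist] using hlim
  · simp [hedist]

section

variable {G : Type*} [AddCommGroup G] [MeasurableSpace G] [MeasurableAdd₂ G] [MeasurableNeg G]
  {ν : Measure G} {K p : G → ℝ}

theorem eLpNorm_comp_sub_sub_le [ν.IsAddRightInvariant] (hp : Measurable p) (y : G) :
    eLpNorm (fun x => p (x - y) - p x) 1 ν ≤ 2 * eLpNorm p 1 ν := by
  have htrans : eLpNorm (fun x => p (x - y)) 1 ν = eLpNorm p 1 ν :=
    eLpNorm_comp_measurePreserving hp.aestronglyMeasurable (measurePreserving_sub_right ν y)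
  calc eLpNorm ((fun x => p (x - y)) - p) 1 ν
      ≤ eLpNorm (fun x => p (x - y)) 1 ν + eLpNorm p 1 ν :=
        eLpNorm_sub_le (hp.comp (measurable_sub_const y)).aestronglyMeasurable
          hp.aestronglyMeasurable le_rfl
    _ = 2 * eLpNorm p 1 ν := by rw [htrans, two_mul]

variable [SFinite ν]

theorem measurable_eLpNorm_comp_sub_sub (hp : Measurable p) :
    Measurable fun y => eLpNorm (fun x => p (x - y) - p x) 1 ν := by
  simp only [eLpNorm_one_eq_lintegral_enorm]
  exact Measurable.lintegral_prod_right' (f := fun z : G × G => ‖p (z.2 - z.1) - p z.2‖ₑ)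
    (by fun_prop)

theorem eLpNorm_convolution_sub_le [ν.IsAddLeftInvariant] (hK : Measurable K)
    (hK1 : ∫ y, K y ∂ν = 1) (hp : Measurable p) (hpi : Integrable p ν) :
    eLpNorm ((K ⋆[ContinuousLinearMap.mul ℝ ℝ, ν] p) - p) 1 ν ≤
      ∫⁻ y, ‖K y‖ₑ * eLpNorm (fun x => p (x - y) - p x) 1 ν ∂ν := by
  have hKi : Integrable K ν := .of_integral_ne_zero (by simp [hK1])
  have hmeas : Measurable fun z : G × G => ‖K z.2‖ₑ * ‖p (z.1 - z.2) - p z.1‖ₑ := by fun_prop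
  have hpt : ∀ᵐ x ∂ν, ‖(K ⋆[ContinuousLinearMap.mul ℝ ℝ, ν] p) x - p x‖ₑ ≤
      ∫⁻ y, ‖K y‖ₑ * ‖p (x - y) - p x‖ₑ ∂ν := by
    filter_upwards [hKi.ae_convolution_exists (ContinuousLinearMap.mul ℝ ℝ) hpi] with x hx
    have hdiff : (K ⋆[ContinuousLinearMap.mul ℝ ℝ, ν] p) x - p x =
        ∫ y, K y * (p (x - y) - p x) ∂ν := by
      have hx' : Integrable (fun y => K y * p (x - y)) ν := hx
      simp only [mul_sub]
      rw [integral_sub hx' (hKi.mul_const _), integral_mul_const, hK1, one_mul, convolution_mul]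
    rw [hdiff]
    exact (enorm_integral_le_lintegral_enorm _).trans_eq (by simp only [enorm_mul])
  simp only [eLpNorm_one_eq_lintegral_enorm, Pi.sub_apply]
  refine (lintegral_mono_ae hpt).trans_eq ?_
  rw [lintegral_lintegral_swap hmeas.aemeasurable]
  refine lintegral_congr fun y => lintegral_const_mul _ (by fun_prop)

end

variable {E : Type*} [NormedAddCommGroup E] [NormedSpace ℝ E]

/-- The rescaling `x ↦ σ⁻ᵈ K(x / σ)` of a kernel `K` on a `d`-dimensional space, which concentrates
its mass near the origin as the bandwidth `σ` tends to zero. -/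
noncomputable def dilatedKernel (σ : ℝ) (K : E → ℝ) (x : E) : ℝ :=
  (σ ^ Module.finrank ℝ E)⁻¹ * K (σ⁻¹ • x)

variable [MeasurableSpace E] [BorelSpace E] {K p : E → ℝ} {σ : ℝ}

theorem measurable_dilatedKernel (hK : Measurable K) : Measurable (dilatedKernel σ K) := by
  unfold dilatedKernel; fun_prop

variable [FiniteDimensional ℝ E] {ν : Measure E} [ν.IsAddHaarMeasure]

theorem integral_dilatedKernel (hσ : 0 < σ) : ∫ x, dilatedKernel σ K x ∂ν = ∫ x, K x ∂ν := by
  simp only [dilatedKernel]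
  rw [integral_const_mul, Measure.integral_comp_inv_smul_of_nonneg ν K hσ.le, smul_eq_mul,
    inv_mul_cancel_left₀ (by positivity)]

theorem lintegral_enorm_dilatedKernel_mul (hσ : 0 < σ) (hK : Measurable K) {w : E → ENNReal}
    (hw : Measurable w) :
    ∫⁻ x, ‖dilatedKernel σ K x‖ₑ * w x ∂ν = ∫⁻ x, ‖K x‖ₑ * w (σ • x) ∂ν := by
  have hscale : ∀ x, ‖K x‖ₑ * w (σ • x) = ‖K (σ⁻¹ • σ • x)‖ₑ * w (σ • x) := fun x => by
    rw [inv_smul_smul₀ hσ.ne']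
  have hmeas : Measurable fun x => ‖K (σ⁻¹ • x)‖ₑ * w x := by fun_prop
  simp only [hscale]
  rw [← lintegral_map hmeas (measurable_const_smul σ), Measure.map_addHaar_smul ν hσ.ne',
    lintegral_smul_measure, smul_eq_mul, ← lintegral_const_mul _ hmeas]
  simp only [dilatedKernel, enorm_mul, mul_assoc, Real.enorm_eq_ofReal_abs]

theorem tendsto_eLpNorm_convolution_dilatedKernel_sub (hK : Measurable K) (hK1 : ∫ x, K x ∂ν = 1)
    (hp : Measurable p) (hpi : Integrable p ν) {ι : Type*} {l : Filter ι} [l.IsCountablyGenerated]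
    {σ : ι → ℝ} (hσ : ∀ i, 0 < σ i) (hσ0 : Tendsto σ l (𝓝 0)) :
    Tendsto (fun i =>
      eLpNorm ((dilatedKernel (σ i) K ⋆[ContinuousLinearMap.mul ℝ ℝ, ν] p) - p) 1 ν) l (𝓝 0) := by
  set ω : E → ENNReal := fun y => eLpNorm (fun x => p (x - y) - p x) 1 ν
  have hω : Measurable ω := measurable_eLpNorm_comp_sub_sub hp
  have hKi : Integrable K ν := .of_integral_ne_zero (by simp [hK1])
  have hbias : ∀ i, eLpNorm ((dilatedKernel (σ i) K ⋆[ContinuousLinearMap.mul ℝ ℝ, ν] p) - p) 1 ν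
      ≤ ∫⁻ x, ‖K x‖ₑ * ω (σ i • x) ∂ν := fun i =>
    (eLpNorm_convolution_sub_le (measurable_dilatedKernel hK)
      ((integral_dilatedKernel (hσ i)).trans hK1) hp hpi).trans_eq
      (lintegral_enorm_dilatedKernel_mul (hσ i) hK hω)
  have hlim : Tendsto (fun i => ∫⁻ x, ‖K x‖ₑ * ω (σ i • x) ∂ν) l (𝓝 (∫⁻ _, 0 ∂ν)) := by
    refine tendsto_lintegral_filter_of_dominated_convergence (fun x => ‖K x‖ₑ * (2 * eLpNorm p 1 ν))
      (Eventually.of_forall fun i => by fun_prop)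
      (Eventually.of_forall fun i => ae_of_all _ fun x =>
        mul_le_mul_right (eLpNorm_comp_sub_sub_le hp _) _) ?_ (ae_of_all _ fun x => ?_)
    · rw [lintegral_mul_const _ hK.enorm]
      exact ENNReal.mul_ne_top hKi.2.ne
        (ENNReal.mul_ne_top ENNReal.ofNat_ne_top (memLp_one_iff_integrable.2 hpi).2.ne)
    · have hσx : Tendsto (fun i => σ i • x) l (𝓝 0) := by simpa using hσ0.smul_const x
      have h := ENNReal.Tendsto.const_mul (a := ‖K x‖ₑ)
        ((tendsto_eLpNorm_comp_sub_sub ENNReal.one_ne_top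
          (memLp_one_iff_integrable.2 hpi)).comp hσx) (Or.inr enorm_ne_top)
      rwa [mul_zero] at h
  rw [lintegral_zero] at hlim
  exact tendsto_of_tendsto_of_tendsto_of_le_of_le tendsto_const_nhds hlim (fun _ => zero_le)
    hbias

end ApproximateIdentity

section Consistency

variable {Ω E : Type*} [MeasurableSpace Ω] [NormedAddCommGroup E] [NormedSpace ℝ E]
  [FiniteDimensional ℝ E] [MeasurableSpace E] [BorelSpace E] {μ : Measure Ω}
  [IsProbabilityMeasure μ] {ν : Measure E} [ν.IsAddHaarMeasure] {T : Ω → E} {K : E → ℝ} {M : ℝ}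
  {σ : ℕ → ℝ}

theorem tendsto_lintegral_eLpNorm_kernelEstimate_sub {S : Set Ω} {p : E → ℝ}
    (hp : HasDensityOn μ S T ν p) (hS : MeasurableSet S) (hT : Measurable T) (hK : Measurable K)
    (hKM : ∀ x, K x ∈ Icc 0 M) (hK1 : ∫ x, K x ∂ν = 1) (hσ : ∀ n, 0 < σ n)
    (hσ0 : Tendsto σ atTop (𝓝 0))
    (hσn : Tendsto (fun n : ℕ => (n : ℝ) * σ n ^ Module.finrank ℝ E) atTop atTop) :
    Tendsto (fun n => ∫⁻ s, eLpNorm (kernelEstimate (dilatedKernel (σ n) K) S T s - p) 1 ν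
      ∂(Measure.pi fun _ : Fin n => μ)) atTop (𝓝 0) := by
  set C : ℕ → ℝ := fun n => (σ n ^ Module.finrank ℝ E)⁻¹ * M
  have hKC : ∀ n x, dilatedKernel (σ n) K x ∈ Icc 0 (C n) := fun n x => by
    have hσd : 0 ≤ (σ n ^ Module.finrank ℝ E)⁻¹ := by have := hσ n; positivity
    exact ⟨mul_nonneg hσd (hKM _).1, mul_le_mul_of_nonneg_left (hKM _).2 hσd⟩
  have hCn : Tendsto (fun n => √(C n / n)) atTop (𝓝 0) := by
    have h := (hσn.inv_tendsto_atTop.mul_const M).sqrt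
    rw [zero_mul, Real.sqrt_zero] at h
    refine h.congr fun n => ?_
    simp only [Pi.inv_apply, C, mul_inv]
    ring_nf
  have hdev := tendsto_lintegral_deviationBound hp.measurable hp.nonneg hp.integrable hCn
  have hbias := ENNReal.Tendsto.const_mul (a := 3)
    (tendsto_eLpNorm_convolution_dilatedKernel_sub hK hK1 hp.measurable hp.integrable hσ hσ0)
    (Or.inr ENNReal.ofNat_ne_top)
  have hbound := hdev.add hbias
  rw [mul_zero, add_zero] at hbound
  refine tendsto_of_tendsto_of_tendsto_of_le_of_le' tendsto_const_nhds hbound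
    (Eventually.of_forall fun _ => zero_le) ?_
  filter_upwards [eventually_ne_atTop 0] with n hn
  exact lintegral_eLpNorm_kernelEstimate_sub_le hp (measurable_dilatedKernel hK) (hKC n) hS hT hn

theorem tendsto_measure_le_abs_calibrationError_sub {Y : Ω → ℝ} {p₀ p₁ ρ : E → ℝ}
    (H : HasClassDensities μ Y T ν p₀ p₁) (hK : Measurable K) (hKM : ∀ x, K x ∈ Icc 0 M)
    (hK1 : ∫ x, K x ∂ν = 1) (hρ : MeasurableEmbedding ρ) (hρ01 : ∀ x, ρ x ∈ Icc (0 : ℝ) 1)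
    (hσ : ∀ n, 0 < σ n) (hσ0 : Tendsto σ atTop (𝓝 0))
    (hσn : Tendsto (fun n : ℕ => (n : ℝ) * σ n ^ Module.finrank ℝ E) atTop atTop) {ε : ℝ}
    (hε : 0 < ε) :
    Tendsto (fun n => (Measure.pi fun _ : Fin n => μ) {s | ε ≤ |calibrationError
      ((empMeas s).prod (ν.withDensity fun x => ENNReal.ofReal (dilatedKernel (σ n) K x)))
      (fun r => Y r.1) (fun r => ρ (T r.1 + r.2)) - calibrationError μ Y (fun ω => ρ (T ω))|})
      atTop (𝓝 0) := by
  have hK0 : ∀ n x, 0 ≤ dilatedKernel (σ n) K x := fun n x =>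
    mul_nonneg (inv_nonneg.2 (pow_nonneg (hσ n).le _)) (hKM _).1
  have hKi : ∀ n, Integrable (dilatedKernel (σ n) K) ν := fun n =>
    .of_integral_ne_zero (by simp [integral_dilatedKernel (hσ n), hK1])
  have herr : ∀ y {p}, HasDensityOn μ (Y ⁻¹' {y}) T ν p → Tendsto (fun n => ∫⁻ s,
      eLpNorm (kernelEstimate (dilatedKernel (σ n) K) (Y ⁻¹' {y}) T s - p) 1 ν
        ∂(Measure.pi fun _ : Fin n => μ)) atTop (𝓝 0) := fun y _ hp =>
    tendsto_lintegral_eLpNorm_kernelEstimate_sub hp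
      (H.measurable_label (measurableSet_singleton y)) H.measurable_score hK hKM hK1 hσ hσ0 hσn
  have hlim := ENNReal.Tendsto.div_const ((herr 0 H.zero).add (herr 1 H.one))
    (Or.inr (ENNReal.ofReal_pos.2 hε).ne')
  rw [add_zero, ENNReal.zero_div] at hlim
  exact tendsto_of_tendsto_of_tendsto_of_le_of_le tendsto_const_nhds hlim (fun _ => zero_le)
    fun n => measure_le_abs_calibrationError_sub_le H (measurable_dilatedKernel hK) (hK0 n) (hKi n)
      hρ hρ01 hε

end Consistency

theorem stmt18_general {α : Type*} [MeasurableSpace α]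
    (π : Measure (α × ℝ)) [IsProbabilityMeasure π]
    (hY : ∀ᵐ q ∂π, q.2 = 0 ∨ q.2 = 1)
    (h : α → ℝ) (hh : Measurable h)
    (pR : ℝ → ℝ) (hpRMeas : Measurable pR) (hpRNonneg : ∀ x, 0 ≤ pR x)
    (hpRInt : ∫ x, pR x = 1) (M : ℝ) (hpRBdd : ∀ x, pR x ≤ M)
    (ρ : ℝ → ℝ) (hρ : MeasurableEmbedding ρ) (hρRange : ∀ x, ρ x ∈ Set.Icc (0 : ℝ) 1)
    (p0 p1 : ℝ → ℝ) (hp0Meas : Measurable p0) (hp1Meas : Measurable p1)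
    (hp0Nonneg : ∀ x, 0 ≤ p0 x) (hp1Nonneg : ∀ x, 0 ≤ p1 x)
    (hcond0 : (π.restrict {q : α × ℝ | q.2 = 0}).map (fun q => h q.1) =
      volume.withDensity fun x => ENNReal.ofReal (p0 x))
    (hcond1 : (π.restrict {q : α × ℝ | q.2 = 1}).map (fun q => h q.1) =
      volume.withDensity fun x => ENNReal.ofReal (p1 x))
    (σs : ℕ → ℝ) (hσpos : ∀ n, 0 < σs n) (hσ0 : Tendsto σs atTop (𝓝 0))
    (hσω : Tendsto (fun n : ℕ => (n : ℝ) * σs n) atTop atTop) (ε : ℝ) (hε : 0 < ε) :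
    Tendsto (fun n : ℕ => (Measure.pi fun _ : Fin n => π) {s : Fin n → α × ℝ |
        ε ≤ |LSECE (empMeas s)
              (volume.withDensity fun x => ENNReal.ofReal ((1 / σs n) * pR (x / σs n))) ρ h
            - ECE π (fun x => ρ (h x))|})
      atTop (𝓝 0) := by
  have H : HasClassDensities π (fun q => q.2) (fun q => h q.1) volume p0 p1 :=
    ⟨measurable_snd, hh.comp measurable_fst, hY, ⟨hp0Meas, hp0Nonneg, hcond0⟩,
      ⟨hp1Meas, hp1Nonneg, hcond1⟩⟩
  have hker : ∀ n x, 1 / σs n * pR (x / σs n) = dilatedKernel (σs n) pR x := fun n x => by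
    simp [dilatedKernel, div_eq_inv_mul]
  simp only [LSECE_eq_calibrationError, ECE_eq_calibrationError, hker]
  exact tendsto_measure_le_abs_calibrationError_sub H hpRMeas
    (fun x => ⟨hpRNonneg x, hpRBdd x⟩) hpRInt hρ hρRange hσpos hσ0
    (by simpa only [Module.finrank_self, pow_one] using hσω) hε

/-- Let `ξₙ = σₙ R` with `R` having a bounded, a.e. continuous density,
`σₙ → 0`, `σₙ = ω(1/n)`. If the conditional law of `h(X)` given `Y = y` has an a.e.
continuous Lebesgue density for `y ∈ {0,1}`, then `LS-ECE_{π̂,ξₙ}(h) → ECE_π(ρ ∘ h)` in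
probability, where `π̂` is the empirical measure of `n` i.i.d. samples from `π`. -/
theorem stmt18 {α : Type*} [MeasurableSpace α]
    (π : Measure (α × ℝ)) [IsProbabilityMeasure π]
    (hY : ∀ᵐ q ∂π, q.2 = 0 ∨ q.2 = 1)
    (h : α → ℝ) (hh : Measurable h)
    (pR : ℝ → ℝ) (hpRMeas : Measurable pR) (hpRNonneg : ∀ x, 0 ≤ pR x)
    (hpRInt : ∫ x, pR x = 1) (M : ℝ) (hpRBdd : ∀ x, pR x ≤ M)
    (hpRCont : ∀ᵐ x ∂(volume : Measure ℝ), ContinuousAt pR x)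
    (ρ ρinv : ℝ → ℝ) (hρMono : StrictMono ρ) (hρRange : ∀ x, ρ x ∈ Set.Icc (0 : ℝ) 1)
    (hρinv : ∀ x, ρinv (ρ x) = x) (hρinvDiff : DifferentiableOn ℝ ρinv (Set.Ioo 0 1))
    (p0 p1 : ℝ → ℝ) (hp0Meas : Measurable p0) (hp1Meas : Measurable p1)
    (hp0Nonneg : ∀ x, 0 ≤ p0 x) (hp1Nonneg : ∀ x, 0 ≤ p1 x)
    (hp0Cont : ∀ᵐ x ∂(volume : Measure ℝ), ContinuousAt p0 x)
    (hp1Cont : ∀ᵐ x ∂(volume : Measure ℝ), ContinuousAt p1 x)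
    (hcond0 : (π.restrict {q : α × ℝ | q.2 = 0}).map (fun q => h q.1) =
      volume.withDensity fun x => ENNReal.ofReal (p0 x))
    (hcond1 : (π.restrict {q : α × ℝ | q.2 = 1}).map (fun q => h q.1) =
      volume.withDensity fun x => ENNReal.ofReal (p1 x))
    (σs : ℕ → ℝ) (hσpos : ∀ n, 0 < σs n) (hσ0 : Tendsto σs atTop (𝓝 0))
    (hσω : Tendsto (fun n : ℕ => (n : ℝ) * σs n) atTop atTop) :
    ∀ ε : ℝ, 0 < ε →
      Tendsto (fun n : ℕ =>
          (Measure.pi fun _ : Fin n => π)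
            {s : Fin n → α × ℝ |
              ε ≤ |LSECE (empMeas s)
                    (volume.withDensity fun x =>
                      ENNReal.ofReal ((1/(σs n)) * pR (x/(σs n)))) ρ h
                  - ECE π (fun x => ρ (h x))|})
        atTop (𝓝 0) := by
  exact stmt18_general π hY h hh pR hpRMeas hpRNonneg hpRInt M hpRBdd ρ
    (hρMono.monotone.measurable.measurableEmbedding hρMono.injective) hρRange p0 p1 hp0Meas hp1Meas
    hp0Nonneg hp1Nonneg hcond0 hcond1 σs hσpos hσ0 hσω
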